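/- Let A be a finite alphabet of size σ ≥ 2. There exists a constant C (depending only on σ) such that for every n ≥ 1, the expected length of the maximal unbordered factor of a uniformly random string of length n over A satisfies (1/σ^n) · Σ_{S ∈ A^n} b(S) ≥ n·(1 − ξ(σ)·σ^{−4}) − C, where ξ(2) = 8 and ξ(σ) = (2σ³ − 2σ²)/((σ−2)(σ² − 2σ + 2)) for σ > 2. -/

import Mathlib

open List Finset Filter

/-- `S` is unbordered: it has no nonempty proper prefix that is also a suffix. -/
def Unbordered {α : Type*} (S : List α) : Prop :=
  ∀ B : List α, B ≠ [] → B.length < S.length → B <+: S → ¬ B <:+ S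

/-- The length of the maximal unbordered factor of `S`. -/
noncomputable def muf {α : Type*} (S : List α) : ℕ :=
  sSup {k | ∃ F : List α, F <:+: S ∧ Unbordered F ∧ F.length = k}

/-- `f` takes the value `b` at every position of the interval `[lo, lo + len)`. -/
def ConstOn {α : Type*} {n : ℕ} (f : Fin n → α) (b : α) (lo len : ℕ) : Prop :=
  ∀ i : Fin n, lo ≤ i → (i : ℕ) < lo + len → f i = b

/-- The prefix of length `j` of the word `f` has a border of length `m`. -/
def PrefixBorder {α : Type*} {n : ℕ} (f : Fin n → α) (j m : ℕ) : Prop :=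
  ∀ i i' : Fin n, (i : ℕ) < m → (i' : ℕ) = j - m + i → f i = f i'

theorem le_muf_of_infix {α : Type*} {S F : List α} (hF : F <:+: S) (hu : Unbordered F) :
    F.length ≤ muf S :=
  le_csSup ⟨S.length, by rintro k ⟨G, hG, -, rfl⟩; exact hG.length_le⟩ ⟨F, hF, hu, rfl⟩

theorem unbordered_take_of_forall_not_prefixBorder {α : Type*} {n : ℕ} (f : Fin n → α) {j : ℕ}
    (hj : j ≤ n) (h : ∀ m, 0 < m → m < j → ¬ PrefixBorder f j m) :
    Unbordered ((List.ofFn f).take j) := by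
  intro B hB hlen hp hs
  have hlen' : B.length < j := by simpa [hj] using hlen
  refine h B.length (List.length_pos_iff.mpr hB) hlen' ?_
  intro i i' hi hi'
  have h1 := hp.getElem (i := i) hi
  obtain ⟨T, hT⟩ := hs
  have hTl : T.length = j - B.length := by
    have := congrArg List.length hT
    simp [hj] at this
    omega
  have hi2 : (i' : ℕ) < ((List.ofFn f).take j).length := by
    simp only [List.length_take, List.length_ofFn]; omega
  have h2 : ((List.ofFn f).take j)[(i' : ℕ)]'hi2 = B[(i : ℕ)] := by
    simp only [← hT]
    rw [List.getElem_append_right (by omega)]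
    congr 1
    omega
  rw [h1] at h2
  simpa using h2.symm

theorem le_muf_ofFn {α : Type*} {n r t M : ℕ} (f : Fin n → α) (b : α) (hr : 0 < r)
    (hk : r * t ≤ n) (h0 : ∀ i : Fin n, (i : ℕ) = 0 → f i ≠ b)
    (hstart : ∀ p < M, p + r ≤ n → ¬ ConstOn f b p r)
    (hblock : ∃ s < t, ConstOn f b (n - r * t + r * s) r)
    (hlong : ∀ d < r * t, ∀ m, M ≤ m → m < n - d → ¬ PrefixBorder f (n - d) m) :
    n - r * t ≤ muf (List.ofFn f) := by
  obtain ⟨s, hs, hb⟩ := hblock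
  have hst : r * s + r ≤ r * t := by
    calc r * s + r = r * (s + 1) := by ring
      _ ≤ r * t := Nat.mul_le_mul_left _ hs
  obtain ⟨d, hd⟩ : ∃ d, d = r * t - (r * s + r) := ⟨_, rfl⟩
  generalize hK : r * t = k at *
  generalize r * s = l at *
  have hu : Unbordered ((List.ofFn f).take (n - d)) := by
    refine unbordered_take_of_forall_not_prefixBorder f (by omega) fun m hm hmj hbord => ?_
    rcases le_or_gt M m with hMm | hMm
    · exact hlong d (by omega) m hMm hmj hbord
    rcases le_or_gt m r with hmr | hmr
    · have hz := hbord ⟨0, by omega⟩ ⟨n - d - m, by omega⟩ hm (by simp)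
      exact h0 _ rfl (hz.trans (hb _ (by simp only []; omega) (by simp only []; omega)))
    · refine hstart (m - r) (by omega) (by omega) fun i hi hi' => ?_
      rw [hbord i ⟨n - d - m + i, by omega⟩ (by omega) rfl]
      exact hb _ (by simp only []; omega) (by simp only []; omega)
  have := le_muf_of_infix (List.take_prefix _ _).isInfix hu
  simp only [List.length_take, List.length_ofFn] at this
  omega

theorem card_mul_pow_le_of_determined {α ι : Type*} [Fintype α] [Fintype ι] [DecidableEq ι]
    (E : Finset (ι → α)) (B : Finset ι)
    (h : ∀ f ∈ E, ∀ g ∈ E, (∀ i ∉ B, f i = g i) → f = g) :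
    E.card * Fintype.card α ^ B.card ≤ Fintype.card α ^ Fintype.card ι := by
  classical
  have h1 : E.card ≤ (Finset.univ : Finset ({i // i ∉ B} → α)).card := by
    refine Finset.card_le_card_of_injOn (fun f i => f i)
      (fun _ _ => Finset.mem_coe.2 (Finset.mem_univ _)) ?_
    intro f hf g hg hfg
    exact h f hf g hg fun i hi => congrFun hfg ⟨i, hi⟩
  have h2 : Fintype.card {i // i ∉ B} = Fintype.card ι - B.card := by
    rw [Fintype.card_subtype_compl, Fintype.card_coe]
  rw [Finset.card_univ, Fintype.card_fun, h2] at h1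
  calc _ ≤ _ := Nat.mul_le_mul_right _ h1
    _ = _ := by rw [← pow_add, Nat.sub_add_cancel (Finset.card_le_univ B)]

theorem card_le_card_filter_eq_mul_pow {α ι : Type*} [Fintype α] [DecidableEq α] [DecidableEq ι]
    (A : Finset (ι → α)) (B : Finset ι) (b : α)
    (hA : ∀ f ∈ A, (fun i => if i ∈ B then b else f i) ∈ A) :
    A.card ≤ (A.filter fun f => ∀ i ∈ B, f i = b).card * Fintype.card α ^ B.card := by
  have hc : Fintype.card α ^ B.card = (Finset.univ : Finset (B → α)).card := by
    rw [Finset.card_univ, Fintype.card_fun, Fintype.card_coe]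
  rw [hc, ← Finset.card_product]
  refine Finset.card_le_card_of_injOn
    (fun f => (fun i => if i ∈ B then b else f i, fun i => f i)) ?_ ?_
  · intro f hf
    simp only [Finset.mem_coe, Finset.mem_product, Finset.mem_filter, Finset.mem_univ, and_true]
    exact ⟨hA f hf, fun i hi => by simp [hi]⟩
  · intro f _ g _ hfg
    simp only [Prod.mk.injEq] at hfg
    funext i
    by_cases hi : i ∈ B
    · exact congrFun hfg.2 ⟨i, hi⟩
    · simpa [hi] using congrFun hfg.1 i

theorem card_filter_val_mem_Ico {n lo len : ℕ} (h : lo + len ≤ n) :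
    (Finset.univ.filter fun i : Fin n => lo ≤ (i : ℕ) ∧ (i : ℕ) < lo + len).card = len := by
  rw [← Finset.card_map Fin.valEmbedding]
  have : (Finset.univ.filter fun i : Fin n => lo ≤ (i : ℕ) ∧ (i : ℕ) < lo + len).map
      Fin.valEmbedding = Finset.Ico lo (lo + len) := by
    ext x
    simp only [Finset.mem_map, Finset.mem_filter, Finset.mem_univ, true_and, Finset.mem_Ico,
      Fin.valEmbedding_apply]
    constructor
    · rintro ⟨i, hi, rfl⟩; exact hi
    · intro hx; exact ⟨⟨x, by omega⟩, hx, rfl⟩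
  rw [this]; simp

open Classical in
theorem card_constOn_le {n σ lo len : ℕ} (hσ : 0 < σ) (b : Fin σ) (h : lo + len ≤ n) :
    ((Finset.univ.filter fun f : Fin n → Fin σ => ConstOn f b lo len).card : ℝ) ≤
      (σ : ℝ) ^ n * (1 / σ) ^ len := by
  have key := card_mul_pow_le_of_determined
    (Finset.univ.filter fun f : Fin n → Fin σ => ConstOn f b lo len)
    (Finset.univ.filter fun i : Fin n => lo ≤ (i : ℕ) ∧ (i : ℕ) < lo + len) ?_
  · rw [card_filter_val_mem_Ico h, Fintype.card_fin, Fintype.card_fin] at key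
    rw [one_div, inv_pow, ← div_eq_mul_inv, le_div_iff₀ (by positivity)]
    exact_mod_cast key
  · intro f hf g hg hfg
    simp only [Finset.mem_filter, Finset.mem_univ, true_and] at hf hg hfg
    funext i
    by_cases hi : lo ≤ (i : ℕ) ∧ (i : ℕ) < lo + len
    · rw [hf i hi.1 hi.2, hg i hi.1 hi.2]
    · exact hfg i hi

open Classical in
theorem card_prefixBorder_le {n σ j m : ℕ} (hσ : 0 < σ) (hj : j ≤ n) (hm : m < j) :
    ((Finset.univ.filter fun f : Fin n → Fin σ => PrefixBorder f j m).card : ℝ) ≤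
      (σ : ℝ) ^ n * (1 / σ) ^ m := by
  have key := card_mul_pow_le_of_determined
    (Finset.univ.filter fun f : Fin n → Fin σ => PrefixBorder f j m)
    (Finset.univ.filter fun i : Fin n => j - m ≤ (i : ℕ) ∧ (i : ℕ) < j - m + m) ?_
  · rw [card_filter_val_mem_Ico (by omega), Fintype.card_fin, Fintype.card_fin] at key
    rw [one_div, inv_pow, ← div_eq_mul_inv, le_div_iff₀ (by positivity)]
    exact_mod_cast key
  · intro f hf g hg hfg
    simp only [Finset.mem_filter, Finset.mem_univ, true_and] at hf hg hfg
    have main : ∀ x : ℕ, ∀ hx : x < n, f ⟨x, hx⟩ = g ⟨x, hx⟩ := by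
      intro x
      induction x using Nat.strong_induction_on with
      | _ x ih =>
        intro hx
        by_cases hi : j - m ≤ x ∧ x < j - m + m
        · have hy : x - (j - m) < n := by omega
          have e : x = j - m + (x - (j - m)) := by omega
          rw [← hf ⟨x - (j - m), hy⟩ ⟨x, hx⟩ (by simp only []; omega) e,
            ← hg ⟨x - (j - m), hy⟩ ⟨x, hx⟩ (by simp only []; omega) e]
          exact ih _ (by omega) hy
        · exact hfg ⟨x, hx⟩ hi
    funext i
    exact main i i.2

open Classical in
theorem card_forall_not_constOn_le {n σ o r : ℕ} (hσ : 0 < σ) (b : Fin σ) (t : ℕ)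
    (h : o + r * t ≤ n) :
    ((Finset.univ.filter fun f : Fin n → Fin σ =>
        ∀ s < t, ¬ ConstOn f b (o + r * s) r).card : ℝ) ≤
      (σ : ℝ) ^ n * (1 - (1 / σ) ^ r) ^ t := by
  induction t with
  | zero => simp
  | succ t ih =>
    rw [Nat.mul_succ] at h
    specialize ih (by omega)
    set A := Finset.univ.filter fun f : Fin n → Fin σ => ∀ s < t, ¬ ConstOn f b (o + r * s) r
      with hA
    set B := Finset.univ.filter fun i : Fin n =>
      o + r * t ≤ (i : ℕ) ∧ (i : ℕ) < o + r * t + r with hB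
    have key := card_le_card_filter_eq_mul_pow A B b ?_
    · have hBc : B.card = r := card_filter_val_mem_Ico (by omega)
      have hsplit : (Finset.univ.filter fun f : Fin n → Fin σ =>
          ∀ s < t + 1, ¬ ConstOn f b (o + r * s) r) =
          A.filter fun f => ¬ ∀ i ∈ B, f i = b := by
        ext f
        simp only [hA, hB, Finset.mem_filter, Finset.mem_univ, true_and, Nat.forall_lt_succ_right,
          and_imp]
        rfl
      have hadd := Finset.card_filter_add_card_filter_not (s := A) (fun f => ∀ i ∈ B, f i = b)
      rw [hsplit]
      rw [hBc, Fintype.card_fin] at key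
      have hpos : (0 : ℝ) < (σ : ℝ) ^ r := by positivity
      have key' : (A.card : ℝ) * (1 / σ) ^ r ≤ ((A.filter fun f => ∀ i ∈ B, f i = b).card : ℝ) := by
        rw [one_div, inv_pow, ← div_eq_mul_inv, div_le_iff₀ hpos]
        norm_cast
        convert key
      have hadd' : ((A.filter fun f => ∀ i ∈ B, f i = b).card : ℝ) +
          ((A.filter fun f => ¬ ∀ i ∈ B, f i = b).card : ℝ) = A.card := by exact_mod_cast hadd
      have hle : (0 : ℝ) ≤ 1 - (1 / σ) ^ r := by
        have : (1 / (σ : ℝ)) ^ r ≤ 1 := pow_le_one₀ (by positivity) (by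
          rw [div_le_one (by positivity)]; exact_mod_cast hσ)
        linarith
      calc ((A.filter fun f => ¬ ∀ i ∈ B, f i = b).card : ℝ)
          ≤ A.card * (1 - (1 / σ) ^ r) := by linarith
        _ ≤ (σ : ℝ) ^ n * (1 - (1 / σ) ^ r) ^ t * (1 - (1 / σ) ^ r) :=
          mul_le_mul_of_nonneg_right ih hle
        _ = _ := by ring
    · intro f hf
      simp only [hA, Finset.mem_filter, Finset.mem_univ, true_and] at hf ⊢
      intro s hs hc
      refine hf s hs fun i hi hi' => ?_
      have hst : r * s + r ≤ r * t := by
        rw [← Nat.mul_succ]; exact Nat.mul_le_mul_left _ hs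
      have hiB : i ∉ B := by
        simp only [hB, Finset.mem_filter, Finset.mem_univ, true_and]; omega
      simpa [hiB] using hc i hi hi'

open Classical in
theorem card_muf_lt_le {n σ r t M : ℕ} (hσ : 2 ≤ σ) (hr : 0 < r) (hk : r * t ≤ n) :
    ((Finset.univ.filter fun f : Fin n → Fin σ => muf (List.ofFn f) < n - r * t).card : ℝ) ≤
      (σ : ℝ) ^ n * (2 * (M * (1 / σ) ^ r) + 2 * (1 - (1 / σ) ^ r) ^ t +
        2 * ((r * t : ℕ) * (1 / σ) ^ M)) := by
  have hσ0 : 0 < σ := by omega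
  let b : Fin 2 → Fin σ := fun c => ⟨c, by omega⟩
  let X : Fin 2 → Finset (Fin n → Fin σ) := fun c =>
    ((Finset.range M).filter fun p => p + r ≤ n).biUnion fun p =>
      Finset.univ.filter fun f => ConstOn f (b c) p r
  let Y : Fin 2 → Finset (Fin n → Fin σ) := fun c =>
    Finset.univ.filter fun f => ∀ s < t, ¬ ConstOn f (b c) (n - r * t + r * s) r
  let Z : Finset (Fin n → Fin σ) := (Finset.range (r * t)).biUnion fun d =>
    (Finset.Ico M (n - d)).biUnion fun m => Finset.univ.filter fun f => PrefixBorder f (n - d) m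
  have hsub : (Finset.univ.filter fun f : Fin n → Fin σ => muf (List.ofFn f) < n - r * t) ⊆
      Finset.univ.biUnion X ∪ Finset.univ.biUnion Y ∪ Z := by
    intro f hf
    by_contra hcon
    simp only [Finset.mem_filter, Finset.mem_univ, true_and] at hf
    refine absurd hf (not_lt.2 ?_)
    simp only [X, Y, Z, Finset.mem_union, Finset.mem_biUnion, Finset.mem_filter, Finset.mem_univ,
      true_and, Finset.mem_range, Finset.mem_Ico, not_or, not_exists, not_and] at hcon
    obtain ⟨⟨hX, hY⟩, hZ⟩ := hcon
    obtain ⟨c, hc⟩ : ∃ c, ∀ i : Fin n, (i : ℕ) = 0 → f i ≠ b c := by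
      by_contra! hne
      obtain ⟨i, hi, hib⟩ := hne 0
      obtain ⟨i', hi', hib'⟩ := hne 1
      have : i = i' := Fin.ext (hi.trans hi'.symm)
      subst this
      rw [hib] at hib'
      simp [b] at hib'
    have hYc := hY c
    push Not at hYc
    exact le_muf_ofFn f (b c) hr hk hc (fun p hp hpn => hX c p ⟨hp, hpn⟩) hYc
      fun d hd m hm hm' => hZ d hd m ⟨hm, hm'⟩
  set x : ℝ := 1 / σ with hx
  have hx0 : 0 ≤ x := by positivity
  have hx2 : x ≤ 1 / 2 := by
    have : (2 : ℝ) ≤ σ := by exact_mod_cast hσ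
    exact one_div_le_one_div_of_le (by norm_num) this
  have hN : (0 : ℝ) ≤ (σ : ℝ) ^ n := by positivity
  have hXc : ∀ c, ((X c).card : ℝ) ≤ (σ : ℝ) ^ n * (M * x ^ r) := by
    intro c
    calc ((X c).card : ℝ) ≤ ∑ p ∈ (Finset.range M).filter fun p => p + r ≤ n,
          ((Finset.univ.filter fun f : Fin n → Fin σ => ConstOn f (b c) p r).card : ℝ) := by
          exact_mod_cast Finset.card_biUnion_le
      _ ≤ ∑ p ∈ (Finset.range M).filter fun p => p + r ≤ n, (σ : ℝ) ^ n * x ^ r :=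
          Finset.sum_le_sum fun p hp => card_constOn_le hσ0 _ (Finset.mem_filter.1 hp).2
      _ ≤ ∑ p ∈ Finset.range M, (σ : ℝ) ^ n * x ^ r :=
          Finset.sum_le_sum_of_subset_of_nonneg (Finset.filter_subset _ _)
            fun _ _ _ => by positivity
      _ = _ := by rw [Finset.sum_const, Finset.card_range, nsmul_eq_mul]; ring
  have hYc : ∀ c, ((Y c).card : ℝ) ≤ (σ : ℝ) ^ n * (1 - x ^ r) ^ t := fun c =>
    card_forall_not_constOn_le hσ0 (b c) t (by omega)
  have hZc : (Z.card : ℝ) ≤ (σ : ℝ) ^ n * (2 * ((r * t : ℕ) * x ^ M)) := by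
    calc (Z.card : ℝ) ≤ ∑ d ∈ Finset.range (r * t), ∑ m ∈ Finset.Ico M (n - d),
          ((Finset.univ.filter fun f : Fin n → Fin σ => PrefixBorder f (n - d) m).card : ℝ) := by
          exact_mod_cast Finset.card_biUnion_le.trans
            (Finset.sum_le_sum fun d _ => Finset.card_biUnion_le)
      _ ≤ ∑ d ∈ Finset.range (r * t), ∑ m ∈ Finset.Ico M (n - d), (σ : ℝ) ^ n * x ^ m :=
          Finset.sum_le_sum fun d _ => Finset.sum_le_sum fun m hm =>
            card_prefixBorder_le hσ0 (Nat.sub_le _ _) (Finset.mem_Ico.1 hm).2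
      _ ≤ ∑ d ∈ Finset.range (r * t), (σ : ℝ) ^ n * (2 * x ^ M) := by
          refine Finset.sum_le_sum fun d _ => ?_
          rw [← Finset.mul_sum]
          refine mul_le_mul_of_nonneg_left ?_ hN
          refine (geom_sum_Ico_le_of_lt_one hx0 (by linarith)).trans ?_
          rw [div_le_iff₀ (by linarith)]
          nlinarith [pow_nonneg hx0 M]
      _ = _ := by rw [Finset.sum_const, Finset.card_range, nsmul_eq_mul]; ring
  have hcard : ((Finset.univ.filter fun f : Fin n → Fin σ =>
      muf (List.ofFn f) < n - r * t).card : ℝ) ≤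
      ∑ c, ((X c).card : ℝ) + ∑ c, ((Y c).card : ℝ) + Z.card := by
    exact_mod_cast (Finset.card_le_card hsub).trans <| (Finset.card_union_le _ _).trans <|
      Nat.add_le_add_right ((Finset.card_union_le _ _).trans <|
        Nat.add_le_add Finset.card_biUnion_le Finset.card_biUnion_le) _
  rw [Fin.sum_univ_two, Fin.sum_univ_two] at hcard
  linarith [hXc 0, hXc 1, hYc 0, hYc 1]

theorem exists_run_length {σ : ℕ} (hσ : 2 ≤ σ) {ε : ℝ} (hε : 0 < ε) :
    ∃ r : ℕ, 0 < r ∧ 2 * ((r ^ 2 : ℕ) * (1 / (σ : ℝ)) ^ r) +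
      2 * (1 - (1 / (σ : ℝ)) ^ r) ^ (r * σ ^ r) +
      2 * ((r * (r * σ ^ r) : ℕ) * (1 / (σ : ℝ)) ^ r ^ 2) ≤ ε := by
  have hσ2 : (2 : ℝ) ≤ σ := by exact_mod_cast hσ
  set x : ℝ := 1 / σ with hx
  have hx0 : 0 < x := by positivity
  have hx1 : x < 1 := by rw [hx, div_lt_one (by linarith)]; linarith
  have hσx : (σ : ℝ) * x = 1 := by rw [hx]; field_simp
  have h1 : Tendsto (fun r : ℕ => (r : ℝ) ^ 2 * x ^ r) atTop (nhds 0) :=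
    tendsto_pow_const_mul_const_pow_of_abs_lt_one 2 (by rwa [abs_of_pos hx0])
  have h2 : Tendsto (fun r : ℕ => Real.exp (-1) ^ r) atTop (nhds 0) :=
    tendsto_pow_atTop_nhds_zero_of_lt_one (Real.exp_pos _).le (by simp)
  have h3 : Tendsto (fun r : ℕ => 4 * ((r : ℝ) ^ 2 * x ^ r) + 2 * Real.exp (-1) ^ r) atTop
      (nhds 0) := by simpa using (h1.const_mul 4).add (h2.const_mul 2)
  obtain ⟨r, hr, hr2⟩ := ((h3.eventually_lt_const hε).and (eventually_ge_atTop 2)).exists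
  refine ⟨r, by omega, ?_⟩
  have hxr : x ^ r ≤ 1 := pow_le_one₀ hx0.le hx1.le
  have hblock : (1 - x ^ r) ^ (r * σ ^ r) ≤ Real.exp (-1) ^ r := by
    calc (1 - x ^ r) ^ (r * σ ^ r) ≤ Real.exp (-x ^ r) ^ (r * σ ^ r) :=
          pow_le_pow_left₀ (by linarith) (Real.one_sub_le_exp_neg _) _
      _ = Real.exp (-1) ^ r := by
          rw [← Real.exp_nat_mul, ← Real.exp_nat_mul]
          congr 1
          push_cast
          have : (σ : ℝ) ^ r * x ^ r = 1 := by rw [← mul_pow, hσx, one_pow]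
          linear_combination (-(r : ℝ)) * this
  have hlong : ((r * (r * σ ^ r) : ℕ) : ℝ) * x ^ r ^ 2 ≤ (r : ℝ) ^ 2 * x ^ r := by
    have hexp : r + r ≤ r ^ 2 := by nlinarith
    calc ((r * (r * σ ^ r) : ℕ) : ℝ) * x ^ r ^ 2 ≤ ((r * (r * σ ^ r) : ℕ) : ℝ) * x ^ (r + r) :=
          mul_le_mul_of_nonneg_left (pow_le_pow_of_le_one hx0.le hx1.le hexp) (by positivity)
      _ = (r : ℝ) ^ 2 * x ^ r * (σ * x) ^ r := by push_cast; ring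
      _ = _ := by rw [hσx, one_pow, mul_one]
  push_cast at hlong ⊢
  linarith

theorem expected_muf_ge_of_pos {σ : ℕ} (hσ : 2 ≤ σ) {ε : ℝ} (hε : 0 < ε) :
    ∃ C : ℝ, ∀ n : ℕ,
      (n : ℝ) * (1 - ε) - C ≤
        (1 / (σ : ℝ) ^ n) * ∑ f : Fin n → Fin σ, (muf (List.ofFn f) : ℝ) := by
  classical
  obtain ⟨r, hr, hrε⟩ := exists_run_length hσ hε
  set k := r * (r * σ ^ r) with hk
  refine ⟨k, fun n => ?_⟩
  have hN : (0 : ℝ) < (σ : ℝ) ^ n := by positivity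
  rcases lt_or_ge n k with hnk | hnk
  · have h1 : (n : ℝ) < k := by exact_mod_cast hnk
    have h2 : (0 : ℝ) ≤ n * ε := by positivity
    have h3 : (0 : ℝ) ≤ (1 / (σ : ℝ) ^ n) * ∑ f : Fin n → Fin σ, (muf (List.ofFn f) : ℝ) := by
      positivity
    linarith
  have hbad := (card_muf_lt_le (M := r ^ 2) hσ hr hnk).trans
    (mul_le_mul_of_nonneg_left hrε hN.le)
  have hsum := Finset.card_filter_add_card_filter_not (s := Finset.univ)
    (fun f : Fin n → Fin σ => muf (List.ofFn f) < n - k)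
  rw [Finset.card_univ, Fintype.card_fun, Fintype.card_fin, Fintype.card_fin] at hsum
  set G := Finset.univ.filter fun f : Fin n → Fin σ => ¬ muf (List.ofFn f) < n - k with hG
  have hgood : (σ : ℝ) ^ n * (1 - ε) ≤ G.card := by
    have hsum' : ((Finset.univ.filter fun f : Fin n → Fin σ =>
        muf (List.ofFn f) < n - k).card : ℝ) + G.card = (σ : ℝ) ^ n := by exact_mod_cast hsum
    linarith
  have hmuf : (G.card : ℝ) * (n - k) ≤ ∑ f : Fin n → Fin σ, (muf (List.ofFn f) : ℝ) := by
    calc (G.card : ℝ) * (n - k) = ∑ _f ∈ G, ((n : ℝ) - k) := by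
          rw [Finset.sum_const, nsmul_eq_mul]
      _ ≤ ∑ f ∈ G, (muf (List.ofFn f) : ℝ) := by
          refine Finset.sum_le_sum fun f hf => ?_
          rw [← Nat.cast_sub hnk]
          exact_mod_cast not_lt.1 (Finset.mem_filter.1 hf).2
      _ ≤ _ := Finset.sum_le_sum_of_subset_of_nonneg (Finset.subset_univ _)
            fun _ _ _ => by positivity
  have hnk' : (0 : ℝ) ≤ (n : ℝ) - k := by
    have : (k : ℝ) ≤ n := by exact_mod_cast hnk
    linarith
  rw [one_div, inv_mul_eq_div, le_div_iff₀ hN]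
  have h1 := mul_le_mul_of_nonneg_right hgood hnk'
  have h2 : (0 : ℝ) ≤ (σ : ℝ) ^ n * ε * k := by positivity
  nlinarith

theorem expected_muf_ge_xi_bound (σ : ℕ) (hσ : 2 ≤ σ) :
    ∃ C : ℝ, ∀ n : ℕ, 1 ≤ n →
      (1 / (σ : ℝ) ^ n) * ∑ f : Fin n → Fin σ, (muf (List.ofFn f) : ℝ) ≥
        (n : ℝ) * (1 - (if σ = 2 then (8 : ℝ)
            else (2 * (σ : ℝ) ^ 3 - 2 * (σ : ℝ) ^ 2) /
              (((σ : ℝ) - 2) * ((σ : ℝ) ^ 2 - 2 * (σ : ℝ) + 2))) / (σ : ℝ) ^ 4) - C := by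
  have hσ2 : (2 : ℝ) ≤ σ := by exact_mod_cast hσ
  obtain ⟨C, hC⟩ := expected_muf_ge_of_pos hσ (ε := (if σ = 2 then (8 : ℝ)
            else (2 * (σ : ℝ) ^ 3 - 2 * (σ : ℝ) ^ 2) /
              (((σ : ℝ) - 2) * ((σ : ℝ) ^ 2 - 2 * (σ : ℝ) + 2))) / (σ : ℝ) ^ 4) (by
    refine div_pos ?_ (by positivity)
    split_ifs with h
    · norm_num
    · have hσ3 : (2 : ℝ) < σ := by exact_mod_cast lt_of_le_of_ne hσ (Ne.symm h)
      refine div_pos ?_ (mul_pos (by linarith) (by nlinarith))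
      have : (0 : ℝ) < 2 * σ ^ 2 * (σ - 1) := mul_pos (by positivity) (by linarith)
      linarith)
  exact ⟨C, fun n _ => hC n⟩
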